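/- arXiv:1812.09637 — 2 statements merged into one kernel-verified Lean document; each statement's English description precedes it below -/
import Mathlib

section
/- Let b ∈ L², let t ≥ 0, and let (b_n) be a sequence of simple processes in H² such that ∫₀ᵗ (b − b_n)² ds → 0 in probability. Then the sequence of elementary stochastic integrals S_n = ∑_{i=1}^{m_n} b_n(t_i^{(n)})(W(t_i^{(n)}) − W(t_{i−1}^{(n)})), formed from representations of b_n with times 0 = t₀^{(n)} < ⋯ < t_{m_n}^{(n)} ≤ t, converges in probability to some random variable. -/
/-!
Convergence in probability of real random variables is complete
(`exists_tendstoInMeasure_of_cauchy`), so it suffices to show that the elementary integrals are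
Cauchy in probability. Two simple processes can be written on a common grid (`exists_grid`,
`IsSimpleWith.elemInt_eq`), so the difference of their integrals is again an elementary sum
`∑ cⱼ (W(rⱼ₊₁) - W(rⱼ))` with `cⱼ` measurable with respect to `F (rⱼ)`. For such sums
`P(|S| ≥ ε) ≤ δ / ε² + P(∑ cⱼ² (rⱼ₊₁ - rⱼ) > δ)` (`elemSum_lenglart`): set `cⱼ` to zero as soon as the
accumulated sum of squares, including the `j`-th term, exceeds `δ`; this event is known at time `rⱼ`,
the stopped coefficients are bounded, and the Itô isometry (`elemSum_isometry`) with Chebyshev's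
inequality gives the first term. Here the sum of squares is `∫₀ᵘ (bₖ - bₗ)² ds`, which is almost surely
at most `2 ∫₀ᵘ (b - bₖ)² ds + 2 ∫₀ᵘ (b - bₗ)² ds` and hence small in probability. Square integrability of
the path of `b` is what makes this comparison legitimate, as the Bochner integral of a
non-integrable function is zero.
-/

open MeasureTheory Filter Set

variable {Ω : Type*} {mΩ : MeasurableSpace Ω}

/-- The filtration is augmented: each `F t` contains all `P`-null sets. -/
def AugmentedFiltration (P : Measure Ω) (F : Filtration ℝ mΩ) : Prop :=
  ∀ t : ℝ, ∀ s : Set Ω, MeasurableSet s → P s = 0 → MeasurableSet[F t] s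

/-- `W` is a standard Wiener process with respect to the filtration `F` under `P`. -/
def IsWienerProcess (P : Measure Ω) (F : Filtration ℝ mΩ) (W : ℝ → Ω → ℝ) : Prop :=
  (∀ ω, Continuous fun t => W t ω) ∧
  (∀ ω, W 0 ω = 0) ∧
  Adapted F W ∧
  ∀ s t : ℝ, 0 ≤ s → s ≤ t →
    ProbabilityTheory.Indep
      (MeasurableSpace.comap (fun ω => W t ω - W s ω) inferInstance) (F s) P ∧
    Measure.map (fun ω => W t ω - W s ω) P
      = ProbabilityTheory.gaussianReal 0 (Real.toNNReal (t - s))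

/-- `b` is a simple process with grid `0 = t 0 < t 1 < ⋯ < t n`. -/
def IsSimpleWith (F : Filtration ℝ mΩ) (b : ℝ → Ω → ℝ) (n : ℕ) (t : ℕ → ℝ) : Prop :=
  t 0 = 0 ∧ (∀ i < n, t i < t (i + 1)) ∧
  Measurable[F 0] (b 0) ∧
  (∀ i < n, Measurable[F (t i)] (b (t (i + 1)))) ∧
  ∀ s ω, b s ω =
    Set.indicator ({0} : Set ℝ) (fun _ => b 0 ω) s +
      ∑ i ∈ Finset.range n,
        Set.indicator (Set.Ioc (t i) (t (i + 1))) (fun _ => b (t (i + 1)) ω) s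

/-- `b ∈ L²`: measurable, adapted, and pathwise locally square integrable a.s. -/
def MemL2 (P : Measure Ω) (F : Filtration ℝ mΩ) (b : ℝ → Ω → ℝ) : Prop :=
  Measurable (Function.uncurry b) ∧ Adapted F b ∧
  ∀ t : ℝ, 0 ≤ t →
    ∀ᵐ ω ∂P, (∫⁻ s in Set.Ioc (0 : ℝ) t, ENNReal.ofReal ((b s ω) ^ 2)) < ⊤

/-- `b ∈ H²`: measurable, adapted, locally square integrable in expectation. -/
def MemH2 (P : Measure Ω) (F : Filtration ℝ mΩ) (b : ℝ → Ω → ℝ) : Prop :=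
  Measurable (Function.uncurry b) ∧ Adapted F b ∧
  ∀ t : ℝ, 0 ≤ t →
    (∫⁻ ω, ∫⁻ s in Set.Ioc (0 : ℝ) t, ENNReal.ofReal ((b s ω) ^ 2) ∂volume ∂P) < ⊤

/-- Elementary stochastic integral `∑ b(tᵢ)(W(tᵢ) − W(tᵢ₋₁))` of a simple process. -/
def ElemInt (W : ℝ → Ω → ℝ) (b : ℝ → Ω → ℝ) (n : ℕ) (t : ℕ → ℝ) (ω : Ω) : ℝ :=
  ∑ i ∈ Finset.range n, b (t (i + 1)) ω * (W (t (i + 1)) ω - W (t i) ω)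

/-! ### Completeness of convergence in probability -/

/-- Completeness of convergence in probability: Borel–Cantelli extracts an almost surely convergent
subsequence, and the Cauchy property transfers its limit to the whole sequence. -/
theorem exists_tendstoInMeasure_of_cauchy (P : Measure Ω) [IsProbabilityMeasure P]
    {S : ℕ → Ω → ℝ} (hS : ∀ k, Measurable (S k))
    (hC : ∀ ε > 0, ∀ η > 0, ∃ N, ∀ k ≥ N, ∀ l ≥ N,
      P.real {ω | ε ≤ |S k ω - S l ω|} ≤ η) :
    ∃ X : Ω → ℝ, Measurable X ∧ TendstoInMeasure P S atTop X := by
  have hpos : ∀ j : ℕ, (0 : ℝ) < (1 / 2) ^ j := fun j => by positivity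
  choose N hN using fun j : ℕ => hC _ (hpos j) _ (hpos j)
  -- increasing indices that dominate both `N` and the identity
  let n : ℕ → ℕ := fun j => j + ∑ i ∈ Finset.range (j + 1), N i
  have hn : ∀ j, N j ≤ n j := fun j =>
    (Finset.single_le_sum (f := N) (fun _ _ => Nat.zero_le _)
      (Finset.self_mem_range_succ j)).trans (Nat.le_add_left _ _)
  have hn' : ∀ j, N j ≤ n (j + 1) := fun j => by
    have h : n (j + 1) = n j + 1 + N (j + 1) := by
      simp only [n, Finset.sum_range_succ _ (j + 1)]
      omega
    have := hn j
    omega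
  have hBC : ∑' j, P {ω | (1 / 2 : ℝ) ^ j ≤ |S (n j) ω - S (n (j + 1)) ω|} ≠ ⊤ := by
    have hsum : Summable (fun j : ℕ => (1 / 2 : ℝ) ^ j) :=
      summable_geometric_of_lt_one (by norm_num) (by norm_num)
    refine ne_top_of_le_ne_top hsum.tsum_ofReal_ne_top (ENNReal.tsum_le_tsum fun j => ?_)
    rw [← ofReal_measureReal]
    exact ENNReal.ofReal_le_ofReal (hN j _ (hn j) _ (hn' j))
  have hlim : ∀ᵐ ω ∂P, ∃ l, Tendsto (fun j => S (n j) ω) atTop (nhds l) := by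
    filter_upwards [ae_eventually_notMem hBC] with ω hω
    obtain ⟨J, hJ⟩ := eventually_atTop.1 hω
    have hc : CauchySeq (fun j => S (n (j + J)) ω) := by
      refine cauchySeq_of_le_geometric (1 / 2) 1 (by norm_num) fun j => ?_
      have h := hJ (j + J) (by omega)
      simp only [not_le] at h
      rw [Real.dist_eq, one_mul, show j + 1 + J = j + J + 1 by ring]
      refine h.le.trans ?_
      exact pow_le_pow_of_le_one (by norm_num) (by norm_num) (by omega)
    obtain ⟨l, hl⟩ := cauchySeq_tendsto_of_complete hc
    exact ⟨l, (tendsto_add_atTop_iff_nat (f := fun j => S (n j) ω) J).1 hl⟩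
  obtain ⟨X, hX, hXlim⟩ :=
    measurable_limit_of_tendsto_metrizable_ae (fun j => (hS (n j)).aemeasurable) hlim
  refine ⟨X, hX, ?_⟩
  have hsub : TendstoInMeasure P (fun j => S (n j)) atTop X :=
    tendstoInMeasure_of_tendsto_ae (fun j => (hS (n j)).aestronglyMeasurable) hXlim
  rw [tendstoInMeasure_iff_measureReal_norm] at hsub ⊢
  intro ε hε
  rw [Metric.tendsto_atTop]
  intro η hη
  obtain ⟨K, hK⟩ := hC (ε / 2) (by positivity) (η / 2) (by positivity)
  refine ⟨K, fun k hk => ?_⟩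
  obtain ⟨J₁, hJ₁⟩ := Metric.tendsto_atTop.1 (hsub (ε / 2) (by positivity)) (η / 2) (by positivity)
  let j := max J₁ K
  have h1 := hJ₁ j (le_max_left _ _)
  have h2 := hK k hk (n j) ((le_max_right J₁ K).trans (Nat.le_add_right _ _))
  rw [Real.dist_eq, sub_zero, abs_of_nonneg measureReal_nonneg] at h1 ⊢
  have hsubset : {ω | ε ≤ ‖S k ω - X ω‖} ⊆
      {ω | ε / 2 ≤ |S k ω - S (n j) ω|} ∪ {ω | ε / 2 ≤ ‖S (n j) ω - X ω‖} := by
    intro ω hω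
    by_contra hcon
    simp only [Set.mem_union, Set.mem_ofPred_eq, not_or, not_le, Real.norm_eq_abs] at hω hcon
    have := abs_sub_le (S k ω) (S (n j) ω) (X ω)
    linarith
  have h3 := (measureReal_mono hsubset (measure_ne_top P _)).trans (measureReal_union_le _ _)
  linarith

/-! ### Common grids -/

/-- A strictly increasing grid `0 = r 0 < ⋯ < r N = u` whose open cells contain no point of `T`.
Beyond `N` the sequence `r` is only required to stay monotone. -/
theorem exists_grid (T : Finset ℝ) : ∀ u : ℝ, 0 ≤ u → (∀ x ∈ T, 0 ≤ x ∧ x ≤ u) →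
    ∃ (N : ℕ) (r : ℕ → ℝ), r 0 = 0 ∧ r N = u ∧ Monotone r ∧ (∀ j < N, r j < r (j + 1)) ∧
      ∀ j < N, ∀ x ∈ T, x ≤ r j ∨ r (j + 1) ≤ x := by
  induction T using Finset.induction_on_max with
  | empty =>
    intro u hu _
    rcases hu.eq_or_lt with rfl | hu
    · exact ⟨0, fun _ => 0, rfl, rfl, fun _ _ _ => le_rfl, by simp, by simp⟩
    · refine ⟨1, fun j => if j = 0 then 0 else u, by simp, by simp, ?_, ?_, by simp⟩
      · intro i j hij
        dsimp only
        split_ifs <;> first | omega | linarith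
      · intro j hj
        obtain rfl : j = 0 := by omega
        simpa using hu
  | insert x T hmax ih =>
    intro u hu hT
    obtain ⟨hx0, hxu⟩ := hT x (Finset.mem_insert_self _ _)
    obtain ⟨N, r, h0, hN, hm, hs, hsep⟩ := ih x hx0 fun y hy =>
      ⟨(hT y (Finset.mem_insert_of_mem hy)).1, (hmax y hy).le⟩
    have hsep' : ∀ j < N, ∀ y ∈ insert x T, y ≤ r j ∨ r (j + 1) ≤ y := by
      intro j hj y hy
      rcases Finset.mem_insert.1 hy with rfl | hy
      · exact Or.inr (hN ▸ hm (by omega))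
      · exact hsep j hj y hy
    rcases hxu.eq_or_lt with rfl | hxu
    · exact ⟨N, r, h0, hN, hm, hs, hsep'⟩
    · refine ⟨N + 1, fun j => if j ≤ N then r j else u, by simp [h0], by simp, ?_, ?_, ?_⟩
      · intro i j hij
        dsimp only
        split_ifs with h1 h2
        · exact hm hij
        · exact (hm h1).trans (hN ▸ hxu.le)
        · omega
        · exact le_rfl
      · intro j hj
        rcases Nat.lt_succ_iff_lt_or_eq.1 hj with hj | rfl
        · simpa [hj.le, Nat.succ_le_of_lt hj] using hs j hj
        · simpa [hN] using hxu
      · intro j hj y hy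
        rcases Nat.lt_succ_iff_lt_or_eq.1 hj with hj | rfl
        · simpa [hj.le, Nat.succ_le_of_lt hj] using hsep' j hj y hy
        · left
          rcases Finset.mem_insert.1 hy with rfl | hy
          · simp [hN]
          · simpa [hN] using (hmax y hy).le

/-! ### Itô isometry and the Lenglart-type bound -/

/-- Itô isometry for elementary sums with bounded integrands. The cross terms vanish because
`W (r (n + 1)) - W (r n)` is centred and independent of `F (r n)`. Measurability and square
integrability are included since the induction on `N` needs them. -/
theorem elemSum_isometry (P : Measure Ω) [IsProbabilityMeasure P] (F : Filtration ℝ mΩ)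
    (W : ℝ → Ω → ℝ) (hW : IsWienerProcess P F W) (N : ℕ) (r : ℕ → ℝ) (hr0 : r 0 = 0)
    (hr : Monotone r) (c : ℕ → Ω → ℝ) (hc : ∀ j < N, Measurable[F (r j)] (c j))
    (hbdd : ∀ j < N, ∃ K, ∀ ω, |c j ω| ≤ K) :
    Measurable[F (r N)] (fun ω => ∑ j ∈ Finset.range N,
        c j ω * (W (r (j + 1)) ω - W (r j) ω)) ∧
      MemLp (fun ω => ∑ j ∈ Finset.range N, c j ω * (W (r (j + 1)) ω - W (r j) ω)) 2 P ∧
      ∫ ω, (∑ j ∈ Finset.range N, c j ω * (W (r (j + 1)) ω - W (r j) ω)) ^ 2 ∂P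
        = ∑ j ∈ Finset.range N, (∫ ω, c j ω ^ 2 ∂P) * (r (j + 1) - r j) := by
  obtain ⟨-, -, hWad, hWinc⟩ := hW
  induction N with
  | zero => simp
  | succ n ih =>
    obtain ⟨ihm, ihL, ihI⟩ := ih (fun j hj => hc j (by omega)) (fun j hj => hbdd j (by omega))
    have hcm := hc n (by omega)
    obtain ⟨K, hK⟩ := hbdd n (by omega)
    have hrn : 0 ≤ r n := hr0 ▸ hr (Nat.zero_le n)
    have hle : r n ≤ r (n + 1) := hr (Nat.le_succ n)
    obtain ⟨hind, hmap⟩ := hWinc (r n) (r (n + 1)) hrn hle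
    set M : Ω → ℝ := fun ω => ∑ j ∈ Finset.range n, c j ω * (W (r (j + 1)) ω - W (r j) ω) with hM
    set D : Ω → ℝ := fun ω => W (r (n + 1)) ω - W (r n) ω with hD
    have hDm' : Measurable[F (r (n + 1))] D :=
      (hWad _).sub ((hWad (r n)).mono (F.mono hle) le_rfl)
    have hDm : Measurable D := hDm'.mono (F.le _) le_rfl
    have hDL : MemLp D 2 P := by
      have h := ProbabilityTheory.memLp_id_gaussianReal' (μ := 0)
        (v := Real.toNNReal (r (n + 1) - r n)) 2 (by simp)
      rw [← hmap] at h
      exact (memLp_map_measure_iff aestronglyMeasurable_id hDm.aemeasurable).1 h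
    have hD1 : ∫ ω, D ω ∂P = 0 := by
      have h := ProbabilityTheory.integral_id_gaussianReal (μ := 0)
        (v := Real.toNNReal (r (n + 1) - r n))
      rw [← hmap, integral_map hDm.aemeasurable (by fun_prop)] at h
      exact h
    have hD2 : ∫ ω, D ω ^ 2 ∂P = r (n + 1) - r n := by
      have h := ProbabilityTheory.variance_fun_id_gaussianReal (μ := 0)
        (v := Real.toNNReal (r (n + 1) - r n))
      rw [← hmap, ProbabilityTheory.variance_map (by fun_prop) hDm.aemeasurable,
        Function.comp_def, ProbabilityTheory.variance_of_integral_eq_zero hDm.aemeasurable hD1,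
        Real.coe_toNNReal _ (sub_nonneg.2 hle)] at h
      exact h
    have hindep : ∀ Y : Ω → ℝ, Measurable[F (r n)] Y → ProbabilityTheory.IndepFun Y D P := by
      intro Y hY
      rw [ProbabilityTheory.IndepFun_iff_Indep]
      exact ProbabilityTheory.indep_of_indep_of_le_left hind.symm hY.comap_le
    have hcm0 : Measurable (c n) := hcm.mono (F.le _) le_rfl
    have hcDL : MemLp (fun ω => c n ω * D ω) 2 P := by
      refine (hDL.const_mul K).of_le (hcm0.mul hDm).aestronglyMeasurable (ae_of_all _ fun ω => ?_)
      rw [Real.norm_eq_abs, Real.norm_eq_abs, abs_mul, abs_mul]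
      exact mul_le_mul_of_nonneg_right ((hK ω).trans (le_abs_self K)) (abs_nonneg _)
    have hcross : ∫ ω, (M ω * c n ω) * D ω ∂P = 0 := by
      have hMc : Measurable[F (r n)] (fun ω => M ω * c n ω) := ihm.mul hcm
      rw [(hindep _ hMc).integral_fun_mul_eq_mul_integral
        (hMc.mono (F.le _) le_rfl).aestronglyMeasurable hDm.aestronglyMeasurable, hD1, mul_zero]
    have hsq : ∫ ω, c n ω ^ 2 * D ω ^ 2 ∂P = (∫ ω, c n ω ^ 2 ∂P) * (r (n + 1) - r n) := by
      have h := (hindep _ hcm).comp (φ := fun x : ℝ => x ^ 2) (ψ := fun x : ℝ => x ^ 2)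
        (by fun_prop) (by fun_prop)
      rw [← hD2]
      exact h.integral_fun_mul_eq_mul_integral (hcm0.pow_const 2).aestronglyMeasurable
        (hDm.pow_const 2).aestronglyMeasurable
    simp only [Finset.sum_range_succ]
    refine ⟨(ihm.mono (F.mono hle) le_rfl).add ((hcm.mono (F.mono hle) le_rfl).mul hDm'),
      ihL.add hcDL, ?_⟩
    have hexp : ∀ ω, (M ω + c n ω * D ω) ^ 2
        = M ω ^ 2 + (2 * (M ω * c n ω * D ω) + c n ω ^ 2 * D ω ^ 2) := fun ω => by ring
    have hi1 : Integrable (fun ω => M ω ^ 2) P := ihL.integrable_sq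
    have hi2 : Integrable (fun ω => 2 * (M ω * c n ω * D ω)) P := by
      simpa [mul_assoc] using (ihL.integrable_mul hcDL).const_mul 2
    have hi3 : Integrable (fun ω => c n ω ^ 2 * D ω ^ 2) P := by
      simpa [mul_pow] using hcDL.integrable_sq
    change ∫ ω, (M ω + c n ω * D ω) ^ 2 ∂P = _
    simp only [hexp]
    have h23 : Integrable (fun ω => 2 * (M ω * c n ω * D ω) + c n ω ^ 2 * D ω ^ 2) P := hi2.add hi3
    rw [integral_add hi1 h23, integral_add hi2 hi3, integral_const_mul, hcross, hsq, ihI]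
    ring

/-- Lenglart-type inequality: switching the integrand off before its quadratic variation exceeds `δ`
changes the sum only on the event in the last term, and the stopped sum has second moment at most
`δ`. -/
theorem elemSum_lenglart (P : Measure Ω) [IsProbabilityMeasure P] (F : Filtration ℝ mΩ)
    (W : ℝ → Ω → ℝ) (hW : IsWienerProcess P F W) (N : ℕ) (r : ℕ → ℝ) (hr0 : r 0 = 0)
    (hr : Monotone r) (hrs : ∀ j < N, r j < r (j + 1)) (c : ℕ → Ω → ℝ)
    (hc : ∀ j < N, Measurable[F (r j)] (c j)) {ε δ : ℝ} (hε : 0 < ε) (hδ : 0 < δ) :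
    P.real {ω | ε ≤ |∑ j ∈ Finset.range N, c j ω * (W (r (j + 1)) ω - W (r j) ω)|} ≤
      δ / ε ^ 2 + P.real {ω | δ < ∑ j ∈ Finset.range N, c j ω ^ 2 * (r (j + 1) - r j)} := by
  classical
  have hnn : ∀ j ω, 0 ≤ c j ω ^ 2 * (r (j + 1) - r j) := fun j ω =>
    mul_nonneg (sq_nonneg _) (sub_nonneg.2 (hr (Nat.le_succ j)))
  let A : ℕ → Ω → ℝ := fun i ω => ∑ j ∈ Finset.range i, c j ω ^ 2 * (r (j + 1) - r j)
  have hAmono : ∀ ω, Monotone fun i => A i ω := fun ω =>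
    monotone_nat_of_le_succ fun i => by
      simp only [A, Finset.sum_range_succ]
      linarith [hnn i ω]
  have hAm : ∀ j < N, Measurable[F (r j)] (A (j + 1)) := by
    intro j hj
    refine Finset.measurable_fun_sum _ fun i hi => ?_
    have hij : i ≤ j := Nat.lt_succ_iff.1 (Finset.mem_range.1 hi)
    exact (((hc i (by omega)).mono (F.mono (hr hij)) le_rfl).pow_const 2).mul_const _
  -- stop the integrand before the accumulated quadratic variation exceeds `δ`
  let c' : ℕ → Ω → ℝ := fun j ω => if A (j + 1) ω ≤ δ then c j ω else 0
  have hc' : ∀ j < N, Measurable[F (r j)] (c' j) := fun j hj =>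
    Measurable.ite (hAm j hj measurableSet_Iic)
      (hc j hj) measurable_const
  have hA' : ∀ n, ∀ ω, ∑ j ∈ Finset.range n, c' j ω ^ 2 * (r (j + 1) - r j) ≤ δ := by
    intro n ω
    induction n with
    | zero => simpa using hδ.le
    | succ n ih =>
      by_cases h : A (n + 1) ω ≤ δ
      · refine le_trans (Finset.sum_le_sum fun j _ => ?_) h
        by_cases h' : A (j + 1) ω ≤ δ
        · simp [c', h']
        · simpa [c', h'] using hnn j ω
      · rw [Finset.sum_range_succ]
        simpa [c', h] using ih
  have hbdd : ∀ j < N, ∃ K, ∀ ω, |c' j ω| ≤ K := by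
    intro j hj
    have hd : 0 < r (j + 1) - r j := sub_pos.2 (hrs j hj)
    refine ⟨Real.sqrt (δ / (r (j + 1) - r j)), fun ω => Real.abs_le_sqrt ?_⟩
    rw [le_div_iff₀ hd]
    refine le_trans ?_ (hA' (j + 1) ω)
    exact Finset.single_le_sum (f := fun j => c' j ω ^ 2 * (r (j + 1) - r j))
      (fun i _ => mul_nonneg (sq_nonneg _) (sub_nonneg.2 (hr (Nat.le_succ i))))
      (Finset.self_mem_range_succ j)
  obtain ⟨-, hL, hI⟩ := elemSum_isometry P F W hW N r hr0 hr c' hc' hbdd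
  set M' : Ω → ℝ := fun ω => ∑ j ∈ Finset.range N, c' j ω * (W (r (j + 1)) ω - W (r j) ω) with hM'
  have hci : ∀ j ∈ Finset.range N, Integrable (fun ω => c' j ω ^ 2 * (r (j + 1) - r j)) P := by
    intro j hj
    obtain ⟨K, hK⟩ := hbdd j (Finset.mem_range.1 hj)
    have hm : Measurable (c' j) := (hc' j (Finset.mem_range.1 hj)).mono (F.le _) le_rfl
    exact ((MemLp.of_bound (p := 2) hm.aestronglyMeasurable K
      (ae_of_all _ hK)).integrable_sq).mul_const _
  have hE : ∫ ω, M' ω ^ 2 ∂P ≤ δ := by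
    rw [hI]
    simp only [← integral_mul_const]
    rw [← integral_finsetSum _ hci]
    calc _ ≤ ∫ _, δ ∂P := integral_mono (integrable_finsetSum _ hci) (integrable_const _) (hA' N)
      _ = δ := by simp
  have hcheb : P.real {ω | ε ≤ |M' ω|} ≤ δ / ε ^ 2 := by
    rw [le_div_iff₀ (by positivity), mul_comm]
    have h := mul_meas_ge_le_integral_of_nonneg (ae_of_all P fun ω => sq_nonneg (M' ω))
      hL.integrable_sq (ε ^ 2)
    have hset : {ω | ε ^ 2 ≤ M' ω ^ 2} = {ω | ε ≤ |M' ω|} := by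
      ext ω
      simp only [Set.mem_ofPred_eq]
      rw [← sq_abs (M' ω)]
      exact pow_le_pow_iff_left₀ hε.le (abs_nonneg _) (by norm_num)
    rw [hset] at h
    exact h.trans hE
  have hsubset : {ω | ε ≤ |∑ j ∈ Finset.range N, c j ω * (W (r (j + 1)) ω - W (r j) ω)|} ⊆
      {ω | ε ≤ |M' ω|} ∪ {ω | δ < A N ω} := by
    intro ω hω
    by_cases h : δ < A N ω
    · exact Or.inr h
    · left
      have : M' ω = ∑ j ∈ Finset.range N, c j ω * (W (r (j + 1)) ω - W (r j) ω) := by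
        refine Finset.sum_congr rfl fun j hj => ?_
        have hj' : A (j + 1) ω ≤ δ :=
          (hAmono ω (Nat.succ_le_of_lt (Finset.mem_range.1 hj))).trans (not_lt.1 h)
        simp [c', hj']
      simpa only [Set.mem_ofPred_eq, this] using hω
  refine (measureReal_mono hsubset (measure_ne_top P _)).trans ((measureReal_union_le _ _).trans ?_)
  exact add_le_add hcheb le_rfl

/-! ### Simple processes on a refined grid -/

/-- If neither `a` nor `b` lies strictly between `x` and `y`, the increment of `w` over `(x, y]`,
kept only when this cell lies in `(a, b]`, is the increment of `w` clamped to `[a, b]`. In this form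
increments telescope over the cells of a grid. -/
theorem clamp_telescope (w : ℝ → ℝ) {a b x y : ℝ} (hab : a ≤ b) (hxy : x < y)
    (ha : a ≤ x ∨ y ≤ a) (hb : b ≤ x ∨ y ≤ b) (v : ℝ) :
    Set.indicator (Set.Ioc a b) (fun _ => v) y * (w y - w x)
      = v * (w (max a (min y b)) - w (max a (min x b))) := by
  rcases ha with ha | ha
  · rcases hb with hb | hb
    · have hn : y ∉ Set.Ioc a b := fun h => absurd h.2 (by linarith)
      rw [Set.indicator_of_notMem hn, min_eq_right (hb.trans hxy.le), min_eq_right hb]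
      ring
    · have hm : y ∈ Set.Ioc a b := ⟨by linarith, hb⟩
      rw [Set.indicator_of_mem hm, min_eq_left hb, min_eq_left (hxy.le.trans hb),
        max_eq_right ha, max_eq_right (ha.trans hxy.le)]
  · have hn : y ∉ Set.Ioc a b := fun h => absurd h.1 (by linarith)
    rw [Set.indicator_of_notMem hn, min_eq_left (ha.trans hab),
      min_eq_left (hxy.le.trans (ha.trans hab)), max_eq_left ha, max_eq_left (hxy.le.trans ha)]
    ring

theorem IsSimpleWith.grid_le {F : Filtration ℝ mΩ} {b : ℝ → Ω → ℝ} {n : ℕ} {t : ℕ → ℝ}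
    (h : IsSimpleWith F b n t) {i j : ℕ} (hij : i ≤ j) (hj : j ≤ n) : t i ≤ t j := by
  induction j, hij using Nat.le_induction with
  | base => exact le_rfl
  | succ k _ ih => exact (ih (by omega)).trans (h.2.1 k (by omega)).le

/-- A simple process is constant on each cell `(x, y]` whose interior contains none of its grid
points. -/
theorem IsSimpleWith.eq_on_cell {F : Filtration ℝ mΩ} {b : ℝ → Ω → ℝ} {n : ℕ} {t : ℕ → ℝ}
    (h : IsSimpleWith F b n t) {x y : ℝ} (hx : 0 ≤ x)
    (hsep : ∀ i ≤ n, t i ≤ x ∨ y ≤ t i) {s : ℝ} (hs : s ∈ Set.Ioc x y) (ω : Ω) :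
    b s ω = b y ω := by
  obtain ⟨-, -, -, -, heq⟩ := h
  have hs0 : s ∉ ({0} : Set ℝ) := fun h0 => by
    rw [Set.mem_singleton_iff] at h0
    linarith [hs.1]
  have hy0 : y ∉ ({0} : Set ℝ) := fun h0 => by
    rw [Set.mem_singleton_iff] at h0
    linarith [hs.1, hs.2]
  rw [heq s ω, heq y ω, Set.indicator_of_notMem hs0, Set.indicator_of_notMem hy0]
  congr 1
  refine Finset.sum_congr rfl fun i hi => ?_
  have hi' := Finset.mem_range.1 hi
  have hiff : s ∈ Set.Ioc (t i) (t (i + 1)) ↔ y ∈ Set.Ioc (t i) (t (i + 1)) := by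
    obtain ⟨h1, h2⟩ := hs
    rcases hsep i hi'.le with h3 | h3 <;> rcases hsep (i + 1) hi' with h4 | h4 <;>
      constructor <;> rintro ⟨h5, h6⟩ <;> constructor <;> linarith
  simp only [Set.indicator, hiff]

/-- The value of a simple process on a cell `(x, y]` that its grid does not cut is known at time
`x`. -/
theorem IsSimpleWith.measurable_cell {F : Filtration ℝ mΩ} {b : ℝ → Ω → ℝ} {n : ℕ} {t : ℕ → ℝ}
    (h : IsSimpleWith F b n t) {x y : ℝ} (hx : 0 ≤ x) (hxy : x < y)
    (hsep : ∀ i ≤ n, t i ≤ x ∨ y ≤ t i) : Measurable[F x] (b y) := by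
  obtain ⟨-, -, -, hm, heq⟩ := h
  have hy0 : y ∉ ({0} : Set ℝ) := fun h0 => by
    rw [Set.mem_singleton_iff] at h0
    linarith
  have hby : b y = fun ω => ∑ i ∈ Finset.range n,
      Set.indicator (Set.Ioc (t i) (t (i + 1))) (fun _ => b (t (i + 1)) ω) y := by
    funext ω
    rw [heq y ω, Set.indicator_of_notMem hy0, zero_add]
  rw [hby]
  refine Finset.measurable_fun_sum _ fun i hi => ?_
  have hi' := Finset.mem_range.1 hi
  by_cases hy : y ∈ Set.Ioc (t i) (t (i + 1))
  · simp only [Set.indicator_of_mem hy]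
    have hle : t i ≤ x := (hsep i hi'.le).resolve_right (not_le.2 hy.1)
    exact (hm i hi').mono (F.mono hle) le_rfl
  · simp only [Set.indicator_of_notMem hy]
    exact measurable_const

/-- The elementary integral does not change when its grid is refined or extended to the right. -/
theorem IsSimpleWith.elemInt_eq {F : Filtration ℝ mΩ} {b : ℝ → Ω → ℝ} {n : ℕ} {t : ℕ → ℝ}
    (h : IsSimpleWith F b n t) (W : ℝ → Ω → ℝ) {N : ℕ} {r : ℕ → ℝ} (hr0 : r 0 = 0)
    (hr : Monotone r) (hrs : ∀ j < N, r j < r (j + 1)) (htN : t n ≤ r N)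
    (hsep : ∀ j < N, ∀ i ≤ n, t i ≤ r j ∨ r (j + 1) ≤ t i) (ω : Ω) :
    ElemInt W b n t ω
      = ∑ j ∈ Finset.range N, b (r (j + 1)) ω * (W (r (j + 1)) ω - W (r j) ω) := by
  have hcell : ∀ j ∈ Finset.range N, b (r (j + 1)) ω * (W (r (j + 1)) ω - W (r j) ω)
      = ∑ i ∈ Finset.range n, b (t (i + 1)) ω *
        (W (max (t i) (min (r (j + 1)) (t (i + 1)))) ω
          - W (max (t i) (min (r j) (t (i + 1)))) ω) := by
    intro j hj
    have hj' := Finset.mem_range.1 hj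
    have hy0 : r (j + 1) ∉ ({0} : Set ℝ) := fun h0 => by
      rw [Set.mem_singleton_iff] at h0
      linarith [hrs j hj', hr (Nat.zero_le j)]
    conv_lhs => rw [h.2.2.2.2 (r (j + 1)) ω, Set.indicator_of_notMem hy0, zero_add, Finset.sum_mul]
    refine Finset.sum_congr rfl fun i hi => ?_
    have hi' := Finset.mem_range.1 hi
    exact clamp_telescope (fun s => W s ω) (h.2.1 i hi').le (hrs j hj')
      (hsep j hj' i hi'.le) (hsep j hj' (i + 1) hi') _
  rw [Finset.sum_congr rfl hcell, Finset.sum_comm]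
  refine Finset.sum_congr rfl fun i hi => ?_
  have hi' := Finset.mem_range.1 hi
  rw [← Finset.mul_sum,
    Finset.sum_range_sub (fun j => W (max (t i) (min (r j) (t (i + 1)))) ω) N]
  have h1 : t (i + 1) ≤ r N := (h.grid_le hi' le_rfl).trans htN
  have h2 : r 0 ≤ t i := by
    rw [hr0, ← h.1]
    exact h.grid_le (Nat.zero_le i) hi'.le
  have h3 := (h.2.1 i hi').le
  rw [min_eq_right h1, max_eq_right h3, min_eq_left (h2.trans h3), max_eq_left h2]

theorem IsSimpleWith.memLp_path {F : Filtration ℝ mΩ} {b : ℝ → Ω → ℝ} {n : ℕ} {t : ℕ → ℝ}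
    (h : IsSimpleWith F b n t) (u : ℝ) (ω : Ω) :
    MemLp (fun s => b s ω) 2 (volume.restrict (Set.Ioc 0 u)) := by
  have heq : (fun s => b s ω) = fun s => Set.indicator ({0} : Set ℝ) (fun _ => b 0 ω) s +
      ∑ i ∈ Finset.range n,
        Set.indicator (Set.Ioc (t i) (t (i + 1))) (fun _ => b (t (i + 1)) ω) s :=
    funext fun s => h.2.2.2.2 s ω
  rw [heq]
  refine MemLp.add ((memLp_const _).indicator (measurableSet_singleton 0)) ?_
  exact memLp_finsetSum _ fun i _ => (memLp_const _).indicator measurableSet_Ioc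

theorem MemL2.ae_memLp_path {P : Measure Ω} {F : Filtration ℝ mΩ} {b : ℝ → Ω → ℝ}
    (hb : MemL2 P F b) {u : ℝ} (hu : 0 ≤ u) :
    ∀ᵐ ω ∂P, MemLp (fun s => b s ω) 2 (volume.restrict (Set.Ioc 0 u)) := by
  filter_upwards [hb.2.2 u hu] with ω hω
  have hm : Measurable fun s => b s ω := hb.1.comp (measurable_id.prodMk measurable_const)
  rw [memLp_two_iff_integrable_sq hm.aestronglyMeasurable]
  refine ⟨(hm.pow_const 2).aestronglyMeasurable, ?_⟩
  rw [hasFiniteIntegral_iff_ofReal (ae_of_all _ fun s => sq_nonneg _)]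
  exact hω

/-- `elemSum_lenglart` for the difference of two simple processes, written on a common refinement of
their grids. -/
theorem elemInt_sub_lenglart (P : Measure Ω) [IsProbabilityMeasure P] (F : Filtration ℝ mΩ)
    (W : ℝ → Ω → ℝ) (hW : IsWienerProcess P F W) {u : ℝ} (hu : 0 ≤ u)
    {b₁ b₂ : ℝ → Ω → ℝ} {n₁ n₂ : ℕ} {t₁ t₂ : ℕ → ℝ}
    (h₁ : IsSimpleWith F b₁ n₁ t₁) (h₂ : IsSimpleWith F b₂ n₂ t₂)
    (hu₁ : t₁ n₁ ≤ u) (hu₂ : t₂ n₂ ≤ u) {ε δ : ℝ} (hε : 0 < ε) (hδ : 0 < δ) :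
    P.real {ω | ε ≤ |ElemInt W b₁ n₁ t₁ ω - ElemInt W b₂ n₂ t₂ ω|} ≤
      δ / ε ^ 2 + P.real {ω | δ < ∫ s in Set.Ioc (0 : ℝ) u, (b₁ s ω - b₂ s ω) ^ 2} := by
  classical
  have hmem : ∀ x ∈ (Finset.range (n₁ + 1)).image t₁ ∪ (Finset.range (n₂ + 1)).image t₂,
      0 ≤ x ∧ x ≤ u := by
    intro x hx
    simp only [Finset.mem_union, Finset.mem_image, Finset.mem_range, Nat.lt_succ_iff] at hx
    rcases hx with ⟨i, hi, rfl⟩ | ⟨i, hi, rfl⟩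
    · exact ⟨h₁.1 ▸ h₁.grid_le (Nat.zero_le i) hi, (h₁.grid_le hi le_rfl).trans hu₁⟩
    · exact ⟨h₂.1 ▸ h₂.grid_le (Nat.zero_le i) hi, (h₂.grid_le hi le_rfl).trans hu₂⟩
  obtain ⟨N, r, hr0, hrN, hr, hrs, hsep⟩ := exists_grid _ u hu hmem
  have hsep₁ : ∀ j < N, ∀ i ≤ n₁, t₁ i ≤ r j ∨ r (j + 1) ≤ t₁ i := fun j hj i hi =>
    hsep j hj _ (Finset.mem_union_left _ (Finset.mem_image_of_mem _ (by simp; omega)))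
  have hsep₂ : ∀ j < N, ∀ i ≤ n₂, t₂ i ≤ r j ∨ r (j + 1) ≤ t₂ i := fun j hj i hi =>
    hsep j hj _ (Finset.mem_union_right _ (Finset.mem_image_of_mem _ (by simp; omega)))
  have hnn : ∀ j, 0 ≤ r j := fun j => hr0 ▸ hr (Nat.zero_le j)
  have hL := elemSum_lenglart P F W hW N r hr0 hr hrs
    (fun j ω => b₁ (r (j + 1)) ω - b₂ (r (j + 1)) ω)
    (fun j hj => (h₁.measurable_cell (hnn j) (hrs j hj) (hsep₁ j hj)).sub
      (h₂.measurable_cell (hnn j) (hrs j hj) (hsep₂ j hj))) hε hδ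
  have hS : ∀ ω, ElemInt W b₁ n₁ t₁ ω - ElemInt W b₂ n₂ t₂ ω = ∑ j ∈ Finset.range N,
      (b₁ (r (j + 1)) ω - b₂ (r (j + 1)) ω) * (W (r (j + 1)) ω - W (r j) ω) := by
    intro ω
    rw [h₁.elemInt_eq W hr0 hr hrs (hrN ▸ hu₁) hsep₁ ω,
      h₂.elemInt_eq W hr0 hr hrs (hrN ▸ hu₂) hsep₂ ω, ← Finset.sum_sub_distrib]
    exact Finset.sum_congr rfl fun j _ => by ring
  have hI : ∀ ω, ∫ s in Set.Ioc (0 : ℝ) u, (b₁ s ω - b₂ s ω) ^ 2 = ∑ j ∈ Finset.range N,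
      (b₁ (r (j + 1)) ω - b₂ (r (j + 1)) ω) ^ 2 * (r (j + 1) - r j) := by
    intro ω
    have hint : IntegrableOn (fun s => (b₁ s ω - b₂ s ω) ^ 2) (Set.Ioc 0 u) volume :=
      ((h₁.memLp_path u ω).sub (h₂.memLp_path u ω)).integrable_sq
    have hint' : ∀ j < N, IntervalIntegrable (fun s => (b₁ s ω - b₂ s ω) ^ 2) volume
        (r j) (r (j + 1)) := by
      intro j hj
      rw [intervalIntegrable_iff_integrableOn_Ioc_of_le (hrs j hj).le]
      exact hint.mono_set (Set.Ioc_subset_Ioc (hnn j) (hrN ▸ hr hj))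
    rw [← intervalIntegral.integral_of_le hu, ← hrN]
    conv_lhs => rw [← hr0]
    rw [← intervalIntegral.sum_integral_adjacent_intervals hint']
    refine Finset.sum_congr rfl fun j hj => ?_
    have hj' := Finset.mem_range.1 hj
    rw [intervalIntegral.integral_of_le (hrs j hj').le,
      setIntegral_congr_fun (g := fun _ => (b₁ (r (j + 1)) ω - b₂ (r (j + 1)) ω) ^ 2)
        measurableSet_Ioc fun s hs => by
          simp only [h₁.eq_on_cell (hnn j) (hsep₁ j hj') hs ω,
            h₂.eq_on_cell (hnn j) (hsep₂ j hj') hs ω]]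
    simp [Measure.real, Real.volume_Ioc, ENNReal.toReal_ofReal (sub_nonneg.2 (hrs j hj').le),
      mul_comm]
  simpa only [hS, hI] using hL

/-! ### Convergence of the elementary integrals -/

/-- If simple `H²` processes `bs k` with grids contained in `[0, u]` approximate
`b ∈ L²` in the sense that `∫₀ᵘ (b − bs k)² ds → 0` in probability, then their
elementary stochastic integrals converge in probability to some random variable. -/
theorem elemInt_tendstoInMeasure
    (P : Measure Ω) [IsProbabilityMeasure P] [P.IsComplete]
    (F : Filtration ℝ mΩ) (hF : AugmentedFiltration P F)
    (W : ℝ → Ω → ℝ) (hW : IsWienerProcess P F W)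
    (b : ℝ → Ω → ℝ) (hb : MemL2 P F b) (u : ℝ) (hu : 0 ≤ u)
    (bs : ℕ → ℝ → Ω → ℝ) (m : ℕ → ℕ) (τ : ℕ → ℕ → ℝ)
    (hsimple : ∀ k, IsSimpleWith F (bs k) (m k) (τ k))
    (hH2 : ∀ k, MemH2 P F (bs k))
    (hle : ∀ k, τ k (m k) ≤ u)
    (happrox : TendstoInMeasure P
      (fun k ω => ∫ s in Set.Ioc (0 : ℝ) u, (b s ω - bs k s ω) ^ 2) atTop
      (fun _ => (0 : ℝ))) :
    ∃ X : Ω → ℝ, Measurable X ∧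
      TendstoInMeasure P (fun k => ElemInt W (bs k) (m k) (τ k)) atTop X := by
  have hWm : ∀ s, Measurable (W s) := fun s => (hW.2.2.1 s).mono (F.le s) le_rfl
  have hbm : ∀ k s, Measurable (bs k s) := fun k s => ((hH2 k).2.1 s).mono (F.le s) le_rfl
  refine exists_tendstoInMeasure_of_cauchy P (fun k => ?_) fun ε hε η hη => ?_
  · exact Finset.measurable_fun_sum _ fun i _ => (hbm k _).mul ((hWm _).sub (hWm _))
  -- `δ` makes the Chebyshev term `δ / ε ^ 2` equal to `η / 2`
  let δ : ℝ := η * ε ^ 2 / 2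
  have hδ : 0 < δ := by positivity
  have hδε : δ / ε ^ 2 = η / 2 := by
    simp only [δ]
    field_simp
  rw [tendstoInMeasure_iff_measureReal_norm] at happrox
  obtain ⟨K, hK⟩ := Metric.tendsto_atTop.1 (happrox (δ / 4) (by positivity)) (η / 4)
    (by positivity)
  refine ⟨K, fun k hk l hl => ?_⟩
  have hk' := hK k hk
  have hl' := hK l hl
  simp only [Real.dist_eq, sub_zero, abs_of_nonneg measureReal_nonneg, Real.norm_eq_abs]
    at hk' hl'
  have hmain := elemInt_sub_lenglart P F W hW hu (hsimple k) (hsimple l) (hle k) (hle l) hε hδ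
  have hae : ({ω | δ < ∫ s in Set.Ioc (0 : ℝ) u, (bs k s ω - bs l s ω) ^ 2} : Set Ω) ≤ᵐ[P]
      ({ω | δ / 4 ≤ |∫ s in Set.Ioc (0 : ℝ) u, (b s ω - bs k s ω) ^ 2|} ∪
        {ω | δ / 4 ≤ |∫ s in Set.Ioc (0 : ℝ) u, (b s ω - bs l s ω) ^ 2|} : Set Ω) := by
    filter_upwards [hb.ae_memLp_path hu] with ω hω hlt
    have hpk := (hsimple k).memLp_path u ω
    have hpl := (hsimple l).memLp_path u ω
    have hik : Integrable (fun s => (b s ω - bs k s ω) ^ 2) (volume.restrict (Set.Ioc 0 u)) :=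
      (hω.sub hpk).integrable_sq
    have hil : Integrable (fun s => (b s ω - bs l s ω) ^ 2) (volume.restrict (Set.Ioc 0 u)) :=
      (hω.sub hpl).integrable_sq
    have hikl : Integrable (fun s => (bs k s ω - bs l s ω) ^ 2)
        (volume.restrict (Set.Ioc 0 u)) := (hpk.sub hpl).integrable_sq
    have hle : ∫ s in Set.Ioc (0 : ℝ) u, (bs k s ω - bs l s ω) ^ 2 ≤
        2 * (∫ s in Set.Ioc (0 : ℝ) u, (b s ω - bs k s ω) ^ 2) +
          2 * ∫ s in Set.Ioc (0 : ℝ) u, (b s ω - bs l s ω) ^ 2 := by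
      rw [← integral_const_mul, ← integral_const_mul,
        ← integral_add (hik.const_mul 2) (hil.const_mul 2)]
      refine integral_mono hikl ((hik.const_mul 2).add (hil.const_mul 2)) fun s => ?_
      change (bs k s ω - bs l s ω) ^ 2 ≤ 2 * (b s ω - bs k s ω) ^ 2 + 2 * (b s ω - bs l s ω) ^ 2
      nlinarith [sq_nonneg (2 * b s ω - bs k s ω - bs l s ω)]
    have hlt' : δ < ∫ s in Set.Ioc (0 : ℝ) u, (bs k s ω - bs l s ω) ^ 2 := hlt
    by_contra hcon
    obtain ⟨h1, h2⟩ := not_or.1 hcon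
    have h1' : ∫ s in Set.Ioc (0 : ℝ) u, (b s ω - bs k s ω) ^ 2 < δ / 4 :=
      lt_of_le_of_lt (le_abs_self _) (lt_of_not_ge h1)
    have h2' : ∫ s in Set.Ioc (0 : ℝ) u, (b s ω - bs l s ω) ^ 2 < δ / 4 :=
      lt_of_le_of_lt (le_abs_self _) (lt_of_not_ge h2)
    linarith
  have hbound := (ENNReal.toReal_mono (measure_ne_top P _) (measure_mono_ae hae)).trans
    (measureReal_union_le _ _)
  change P.real _ ≤ _ at hbound
  linarith
end

section
/- Let b ∈ L², let t ≥ 0, and let (b_n) and (c_n) be two sequences of simple processes in H² such that ∫₀ᵗ (b − b_n)² ds → 0 and ∫₀ᵗ (b − c_n)² ds → 0 in probability. If the elementary stochastic integrals of b_n up to time t converge in probability to a random variable X, and the elementary stochastic integrals of c_n up to time t converge in probability to a random variable Y, then X = Y with probability one; in other words, the probability limit of the elementary integrals is independent of the approximating sequence. -/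
/-!
The theorem reduces to showing that the difference of the two elementary integrals tends to `0` in
probability: the integrals of `bs k` then converge to both `X` and `Y`, and limits in measure are
almost everywhere unique.

For this, both integrands are written on the union `s 0 < ⋯ < s N` of their grids
(`elemInt_eq_refine`), so that the difference is the elementary integral of a simple process with
coefficients `e j` that are `F (s j)`-measurable. The key estimate (`grid_tail_bound`) is
`P(|∑ e j ΔW j| ≥ ε) ≤ P(∑ (e j)² Δs j > δ) + δ / ε²`. Replacing `e j` by `0` as soon as the
partial sum of `(e i)² Δs i` over `i ≤ j` exceeds `δ` leaves the coefficients adapted, makes them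
bounded and keeps the sum of squares at most `δ`; the Itô isometry (`ito_isometry`) and Chebyshev's
inequality bound the truncated integral, which differs from the original one only where the full sum
exceeds `δ`.

Finally the sum of squares is at most the pathwise integral of `(bs k - cs k)²`, hence at most
`2 ∫ (b - bs k)² + 2 ∫ (b - cs k)²`, which tends to `0` in probability
(`elemInt_sub_tail_bound`). Both integrals on the right are genuine (not junk values) for almost
every `ω`, because `b` is in `L²` and the paths of simple processes are bounded.
-/

open MeasureTheory Filter Set

variable {Ω : Type*} {mΩ : MeasurableSpace Ω}

/-! ### The Itô isometry and the truncation inequality on a fixed grid -/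

/-- A Wiener increment over `[s, t]` is square integrable, centred, of second moment `t - s`,
and independent of every `F s`-measurable random variable. -/
lemma wiener_increment {P : Measure Ω} [IsProbabilityMeasure P] {F : Filtration ℝ mΩ}
    {W : ℝ → Ω → ℝ} (hW : IsWienerProcess P F W) {s t : ℝ} (hs : 0 ≤ s) (hst : s ≤ t) :
    MemLp (fun ω => W t ω - W s ω) 2 P ∧ ∫ ω, (W t ω - W s ω) ∂P = 0 ∧
    ∫ ω, (W t ω - W s ω) ^ 2 ∂P = t - s ∧
    ∀ Z : Ω → ℝ, Measurable[F s] Z →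
      ProbabilityTheory.IndepFun Z (fun ω => W t ω - W s ω) P := by
  obtain ⟨-, -, had, hinc⟩ := hW
  obtain ⟨hind, hlaw⟩ := hinc s t hs hst
  have hm : Measurable (fun ω => W t ω - W s ω) :=
    ((had t).mono (F.le t) le_rfl).sub ((had s).mono (F.le s) le_rfl)
  have hmean : ∫ ω, (W t ω - W s ω) ∂P = 0 := by
    have h := integral_map (μ := P) hm.aemeasurable
      (f := fun x : ℝ => x) measurable_id.aestronglyMeasurable
    rw [hlaw, ProbabilityTheory.integral_id_gaussianReal] at h
    exact h.symm
  have hsq : ∫ ω, (W t ω - W s ω) ^ 2 ∂P = t - s := by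
    have h := integral_map (μ := P) hm.aemeasurable
      (f := fun x : ℝ => x ^ 2) (measurable_id.pow_const 2).aestronglyMeasurable
    have hv := ProbabilityTheory.variance_id_gaussianReal (μ := 0) (v := Real.toNNReal (t - s))
    rw [ProbabilityTheory.variance_of_integral_eq_zero measurable_id.aemeasurable
      ProbabilityTheory.integral_id_gaussianReal] at hv
    rw [hlaw] at h
    rw [← h]
    simpa [Real.coe_toNNReal _ (sub_nonneg.2 hst)] using hv
  refine ⟨?_, hmean, hsq, fun Z hZ => ?_⟩
  · have h := ProbabilityTheory.memLp_id_gaussianReal' (μ := 0)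
      (v := Real.toNNReal (t - s)) 2 (by simp)
    rw [← hlaw] at h
    exact (memLp_map_measure_iff measurable_id.aestronglyMeasurable hm.aemeasurable).1 h
  · rw [ProbabilityTheory.IndepFun_iff_Indep]
    exact ProbabilityTheory.indep_of_indep_of_le_left hind.symm hZ.comap_le

/-- Itô isometry for bounded coefficients on a grid: each increment is orthogonal to the past, so
second moments add up. -/
lemma ito_isometry {P : Measure Ω} [IsProbabilityMeasure P] {F : Filtration ℝ mΩ}
    {W : ℝ → Ω → ℝ} (hW : IsWienerProcess P F W) {N : ℕ} {s : ℕ → ℝ}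
    (hs0 : ∀ j ≤ N, 0 ≤ s j) (hs : ∀ j < N, s j < s (j + 1)) {e : ℕ → Ω → ℝ}
    (he : ∀ j < N, Measurable[F (s j)] (e j)) (hbd : ∀ j < N, ∃ C : ℝ, ∀ ω, |e j ω| ≤ C) :
    ∀ n ≤ N,
      Measurable[F (s n)] (fun ω => ∑ j ∈ Finset.range n, e j ω * (W (s (j + 1)) ω - W (s j) ω)) ∧
      MemLp (fun ω => ∑ j ∈ Finset.range n, e j ω * (W (s (j + 1)) ω - W (s j) ω)) 2 P ∧
      ∫ ω, (∑ j ∈ Finset.range n, e j ω * (W (s (j + 1)) ω - W (s j) ω)) ^ 2 ∂P =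
        ∫ ω, ∑ j ∈ Finset.range n, e j ω ^ 2 * (s (j + 1) - s j) ∂P := by
  intro n
  induction n with
  | zero => intro _; simp
  | succ n ih =>
    intro hn
    have hnN : n < N := hn
    obtain ⟨hSm, hS2, hSeq⟩ := ih hnN.le
    set S : Ω → ℝ := fun ω => ∑ j ∈ Finset.range n, e j ω * (W (s (j + 1)) ω - W (s j) ω) with hS
    set D : Ω → ℝ := fun ω => W (s (n + 1)) ω - W (s n) ω with hD
    obtain ⟨hD2, hD1, hDsq, hDind⟩ := wiener_increment hW (hs0 n hnN.le) (hs n hnN).le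
    have hle := F.mono (hs n hnN).le
    have hem : Measurable (e n) := (he n hnN).mono (F.le _) le_rfl
    have hInf : ∀ j < N, MemLp (e j) ⊤ P := fun j hj => by
      obtain ⟨C, hC⟩ := hbd j hj
      exact memLp_top_of_bound ((he j hj).mono (F.le _) le_rfl).aestronglyMeasurable C
        (ae_of_all _ hC)
    have hE2 : ∀ j < N, MemLp (e j) 2 P := fun j hj => (hInf j hj).mono_exponent le_top
    have hED : MemLp (fun ω => e n ω * D ω) 2 P := hD2.mul' (hInf n hnN)
    have hSE : MemLp (fun ω => S ω * e n ω) 2 P := (hInf n hnN).mul' hS2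
    have hDm : Measurable[F (s (n + 1))] D := (hW.2.2.1 _).sub ((hW.2.2.1 _).mono hle le_rfl)
    refine ⟨?_, ?_, ?_⟩
    · simp only [Finset.sum_range_succ]
      exact (hSm.mono hle le_rfl).add (((he n hnN).mono hle le_rfl).mul hDm)
    · simp only [Finset.sum_range_succ]
      exact hS2.add hED
    · have hcross : ∫ ω, (S ω * e n ω) * D ω ∂P = 0 := by
        have h := (hDind (fun ω => S ω * e n ω) (hSm.mul (he n hnN))).integral_fun_mul_eq_mul_integral
          hSE.1 hD2.1
        rw [hD1, mul_zero] at h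
        exact h
      have hdiag : ∫ ω, e n ω ^ 2 * D ω ^ 2 ∂P = ∫ ω, e n ω ^ 2 * (s (n + 1) - s n) ∂P := by
        have hi := (hDind _ (he n hnN)).comp (φ := fun x : ℝ => x ^ 2) (ψ := fun x : ℝ => x ^ 2)
          (measurable_id.pow_const 2) (measurable_id.pow_const 2)
        have h := hi.integral_fun_mul_eq_mul_integral (hem.pow_const 2).aestronglyMeasurable
          (hD2.1.pow 2)
        simp only [Function.comp_def] at h
        rw [integral_mul_const, ← hDsq]
        exact h
      have hi1 : Integrable (fun ω => S ω ^ 2) P := hS2.integrable_sq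
      have hi2 : Integrable (fun ω => 2 * ((S ω * e n ω) * D ω)) P :=
        (MemLp.integrable_mul hSE hD2).const_mul 2
      have hi3 : Integrable (fun ω => e n ω ^ 2 * D ω ^ 2) P := by
        simpa [mul_pow] using hED.integrable_sq
      have hexp : ∀ ω, (∑ j ∈ Finset.range (n + 1), e j ω * (W (s (j + 1)) ω - W (s j) ω)) ^ 2
          = S ω ^ 2 + 2 * ((S ω * e n ω) * D ω) + e n ω ^ 2 * D ω ^ 2 := fun ω => by
        rw [Finset.sum_range_succ]; simp only [hS, hD]; ring
      simp only [hexp]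
      rw [integral_add (f := fun ω => S ω ^ 2 + 2 * ((S ω * e n ω) * D ω)) (hi1.add hi2) hi3,
        integral_add hi1 hi2, integral_const_mul, hcross, hdiag, hSeq]
      simp only [Finset.sum_range_succ]
      rw [integral_add]
      · ring
      · refine integrable_finsetSum _ fun j hj => ?_
        exact ((hE2 j ((Finset.mem_range.1 hj).trans hnN)).integrable_sq).mul_const _
      · exact ((hE2 n hnN).integrable_sq).mul_const _

/-- The key inequality `P(|I| ≥ ε) ≤ P(A > δ) + δ / ε²`, where `I` is the elementary integral and
`A` the integral of the square of the integrand. The integrand is switched off once `A` passes `δ`,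
and Chebyshev's inequality is applied to what remains. -/
lemma grid_tail_bound {P : Measure Ω} [IsProbabilityMeasure P] {F : Filtration ℝ mΩ}
    {W : ℝ → Ω → ℝ} (hW : IsWienerProcess P F W) {N : ℕ} {s : ℕ → ℝ}
    (hs0 : ∀ j ≤ N, 0 ≤ s j) (hs : ∀ j < N, s j < s (j + 1)) {e : ℕ → Ω → ℝ}
    (he : ∀ j < N, Measurable[F (s j)] (e j)) {δ ε : ℝ} (hδ : 0 < δ) (hε : 0 < ε) :
    P {ω | ε ≤ |∑ j ∈ Finset.range N, e j ω * (W (s (j + 1)) ω - W (s j) ω)|} ≤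
      P {ω | δ < ∑ j ∈ Finset.range N, e j ω ^ 2 * (s (j + 1) - s j)} +
        ENNReal.ofReal (δ / ε ^ 2) := by
  classical
  have hsm : MonotoneOn s (Set.Iic N) := by
    apply monotoneOn_of_le_succ Set.ordConnected_Iic
    intro a _ _ ha
    exact (hs a (Nat.lt_of_succ_le ha)).le
  set A : ℕ → Ω → ℝ := fun n ω => ∑ j ∈ Finset.range n, e j ω ^ 2 * (s (j + 1) - s j) with hA
  have hterm : ∀ j < N, ∀ ω, 0 ≤ e j ω ^ 2 * (s (j + 1) - s j) := fun j hj ω =>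
    mul_nonneg (sq_nonneg _) (sub_nonneg.2 (hs j hj).le)
  set e' : ℕ → Ω → ℝ := fun j ω => if A (j + 1) ω ≤ δ then e j ω else 0 with he'
  have hAm : ∀ j < N, Measurable[F (s j)] (A (j + 1)) := fun j hj => by
    refine Finset.measurable_sum _ fun i hi => ?_
    have hij : i ≤ j := Nat.lt_succ_iff.1 (Finset.mem_range.1 hi)
    exact (((he i (hij.trans_lt hj)).mono
      (F.mono (hsm (hij.trans hj.le) hj.le hij)) le_rfl).pow_const 2).mul_const _
  have he'm : ∀ j < N, Measurable[F (s j)] (e' j) := fun j hj => by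
    refine Measurable.ite ?_ (he j hj) measurable_const
    exact (hAm j hj) measurableSet_Iic
  have hA' : ∀ ω, ∀ n ≤ N, ∑ j ∈ Finset.range n, e' j ω ^ 2 * (s (j + 1) - s j) ≤ δ := by
    intro ω n
    induction n with
    | zero => intro _; simpa using hδ.le
    | succ n ih =>
      intro hn
      by_cases h : A (n + 1) ω ≤ δ
      · refine le_trans (Finset.sum_le_sum fun j hj => ?_) h
        have hj' : j < N := lt_of_lt_of_le (Finset.mem_range.1 hj) hn
        by_cases h' : A (j + 1) ω ≤ δ
        · simp [he', h']
        · simpa [he', h'] using hterm j hj' ω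
      · rw [Finset.sum_range_succ]
        simpa [he', h] using ih (Nat.le_of_succ_le hn)
  have hbd : ∀ j < N, ∃ C : ℝ, ∀ ω, |e' j ω| ≤ C := fun j hj => by
    refine ⟨√(δ / (s (j + 1) - s j)), fun ω => Real.abs_le_sqrt ?_⟩
    rw [le_div_iff₀ (sub_pos.2 (hs j hj))]
    refine le_trans (Finset.single_le_sum
      (f := fun i => e' i ω ^ 2 * (s (i + 1) - s i)) (fun i hi => ?_)
      (Finset.mem_range.2 hj)) (hA' ω N le_rfl)
    exact mul_nonneg (sq_nonneg _) (sub_nonneg.2 (hs i (Finset.mem_range.1 hi)).le)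
  obtain ⟨-, hS2, hSeq⟩ := ito_isometry hW hs0 hs he'm hbd N le_rfl
  set S : Ω → ℝ := fun ω => ∑ j ∈ Finset.range N, e' j ω * (W (s (j + 1)) ω - W (s j) ω) with hS
  have hint : ∫ ω, S ω ^ 2 ∂P ≤ δ := by
    rw [hSeq]
    have h := integral_mono_of_nonneg (μ := P) (g := fun _ => δ)
      (f := fun ω => ∑ j ∈ Finset.range N, e' j ω ^ 2 * (s (j + 1) - s j))
      (ae_of_all _ fun ω => Finset.sum_nonneg fun i hi =>
        mul_nonneg (sq_nonneg _) (sub_nonneg.2 (hs i (Finset.mem_range.1 hi)).le))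
      (integrable_const _) (ae_of_all _ fun ω => hA' ω N le_rfl)
    simpa using h
  have hcheb : P {ω | ε ^ 2 ≤ S ω ^ 2} ≤ ENNReal.ofReal (δ / ε ^ 2) := by
    have h := mul_meas_ge_le_integral_of_nonneg (μ := P) (f := fun ω => S ω ^ 2)
      (ae_of_all _ fun ω => sq_nonneg _) hS2.integrable_sq (ε ^ 2)
    rw [← ofReal_measureReal]
    apply ENNReal.ofReal_le_ofReal
    rw [le_div_iff₀ (by positivity)]
    linarith
  refine (measure_mono ?_).trans ((measure_union_le _ _).trans (add_le_add le_rfl hcheb))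
  intro ω hω
  by_cases h : A N ω ≤ δ
  · right
    have hall : ∀ j ∈ Finset.range N, e' j ω = e j ω := fun j hj => by
      have hj' := Finset.mem_range.1 hj
      have : A (j + 1) ω ≤ δ := le_trans
        (Finset.sum_le_sum_of_subset_of_nonneg (Finset.range_mono hj') fun i hi _ =>
          hterm i (Finset.mem_range.1 hi) ω) h
      simp [he', this]
    have hSω : S ω = ∑ j ∈ Finset.range N, e j ω * (W (s (j + 1)) ω - W (s j) ω) :=
      Finset.sum_congr rfl fun j hj => by rw [hall j hj]
    change ε ^ 2 ≤ S ω ^ 2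
    rw [hSω, ← sq_abs (∑ j ∈ Finset.range N, e j ω * (W (s (j + 1)) ω - W (s j) ω))]
    exact pow_le_pow_left₀ hε.le hω 2
  · left
    exact not_le.1 h

/-! ### Refining the grid of a simple process -/

/-- A finite nonempty set of reals, listed increasingly as `s 0 < ⋯ < s N`. -/
lemma exists_grid_s11 (G : Finset ℝ) (hG : G.Nonempty) :
    ∃ (N : ℕ) (s : ℕ → ℝ), StrictMonoOn s (Set.Iic N) ∧ (∀ j ≤ N, s j ∈ G) ∧
      ∀ x ∈ G, ∃ p ≤ N, s p = x := by
  have hc : 0 < G.card := hG.card_pos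
  refine ⟨G.card - 1,
    fun j => G.orderEmbOfFin rfl ⟨min j (G.card - 1), by omega⟩, ?_, ?_, ?_⟩
  · intro a ha b hb hab
    simp only [Set.mem_Iic] at ha hb
    simp only [OrderEmbedding.lt_iff_lt, Fin.mk_lt_mk]
    omega
  · intro j _
    exact Finset.orderEmbOfFin_mem _ _ _
  · intro x hx
    have : x ∈ Set.range (G.orderEmbOfFin rfl) := by simpa using hx
    obtain ⟨p, rfl⟩ := this
    refine ⟨p, by omega, ?_⟩
    exact congrArg _ (Fin.ext (min_eq_left (by omega)))

section Refine

variable {F : Filtration ℝ mΩ} {b : ℝ → Ω → ℝ} {m : ℕ} {t : ℕ → ℝ} {N : ℕ} {s : ℕ → ℝ}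

lemma simple_grid_mono (h : IsSimpleWith F b m t) : MonotoneOn t (Set.Iic m) := by
  apply monotoneOn_of_le_succ Set.ordConnected_Iic
  intro a _ _ ha
  exact (h.2.1 a (Nat.lt_of_succ_le ha)).le

lemma simple_apply_of_pos (h : IsSimpleWith F b m t) {x : ℝ} (hx : 0 < x) (ω : Ω) :
    b x ω = ∑ i ∈ Finset.range m,
      Set.indicator (Set.Ioc (t i) (t (i + 1))) (fun _ => b (t (i + 1)) ω) x := by
  rw [h.2.2.2.2 x ω, Set.indicator_of_notMem (by simpa using hx.ne'), zero_add]

/-- Between two consecutive points of a finer grid, no point of the coarse grid separates. -/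
lemma mem_Ioc_iff_refine (hs : StrictMonoOn s (Set.Iic N))
    (href : ∀ i ≤ m, ∃ p ≤ N, s p = t i) {j : ℕ} (hj : j < N) {x : ℝ}
    (hx : x ∈ Set.Ioc (s j) (s (j + 1))) {i : ℕ} (hi : i < m) :
    x ∈ Set.Ioc (t i) (t (i + 1)) ↔ s (j + 1) ∈ Set.Ioc (t i) (t (i + 1)) := by
  obtain ⟨p, hp, hpt⟩ := href i hi.le
  obtain ⟨q, hq, hqt⟩ := href (i + 1) hi
  have h1 : x ≤ t (i + 1) ↔ s (j + 1) ≤ t (i + 1) := by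
    refine ⟨fun h => ?_, fun h => hx.2.trans h⟩
    have : s j < s q := hqt ▸ hx.1.trans_le h
    rw [← hqt]
    exact hs.monotoneOn hj hq ((hs.lt_iff_lt hj.le hq).1 this)
  have h2 : t i < x ↔ t i < s (j + 1) := by
    refine ⟨fun h => h.trans_le hx.2, fun h => ?_⟩
    rw [← hpt] at h ⊢
    have := (hs.lt_iff_lt hp (show j + 1 ≤ N from hj)).1 h
    exact (hs.monotoneOn hp hj.le (Nat.lt_succ_iff.1 this)).trans_lt hx.1
  simp only [Set.mem_Ioc, h1, h2]

lemma simple_const_on_cell (h : IsSimpleWith F b m t) (hs : StrictMonoOn s (Set.Iic N))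
    (hs0 : ∀ j ≤ N, 0 ≤ s j) (href : ∀ i ≤ m, ∃ p ≤ N, s p = t i) {j : ℕ} (hj : j < N) {x : ℝ}
    (hx : x ∈ Set.Ioc (s j) (s (j + 1))) (ω : Ω) : b x ω = b (s (j + 1)) ω := by
  have hx0 : 0 < x := (hs0 j hj.le).trans_lt hx.1
  rw [simple_apply_of_pos h hx0, simple_apply_of_pos h (hx0.trans_le hx.2)]
  refine Finset.sum_congr rfl fun i hi => ?_
  simp only [Set.indicator, mem_Ioc_iff_refine hs href hj hx (Finset.mem_range.1 hi)]

lemma simple_measurable_cell (h : IsSimpleWith F b m t) (hs : StrictMonoOn s (Set.Iic N))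
    (hs0 : ∀ j ≤ N, 0 ≤ s j) (href : ∀ i ≤ m, ∃ p ≤ N, s p = t i) {j : ℕ} (hj : j < N) :
    Measurable[F (s j)] (b (s (j + 1))) := by
  have hlt : s j < s (j + 1) := hs hj.le (show j + 1 ≤ N from hj) (Nat.lt_succ_self j)
  have hx0 : 0 < s (j + 1) := (hs0 j hj.le).trans_lt hlt
  rw [funext (simple_apply_of_pos h hx0)]
  refine Finset.measurable_sum _ fun i hi => ?_
  have hi := Finset.mem_range.1 hi
  by_cases hmem : s (j + 1) ∈ Set.Ioc (t i) (t (i + 1))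
  · simp only [Set.indicator_of_mem hmem]
    obtain ⟨p, hp, hpt⟩ := href i hi.le
    have h1 := hmem.1
    rw [← hpt] at h1
    have := (hs.lt_iff_lt hp (show j + 1 ≤ N from hj)).1 h1
    have hle : t i ≤ s j := hpt ▸ hs.monotoneOn hp hj.le (Nat.lt_succ_iff.1 this)
    exact (h.2.2.2.1 i hi).mono (F.mono hle) le_rfl
  · simp only [Set.indicator_of_notMem hmem]
    exact measurable_const

/-- The elementary integral may be computed on any finer grid. -/
lemma elemInt_eq_refine (W : ℝ → Ω → ℝ) (h : IsSimpleWith F b m t)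
    (hs : StrictMonoOn s (Set.Iic N))
    (hs0 : ∀ j ≤ N, 0 ≤ s j) (href : ∀ i ≤ m, ∃ p ≤ N, s p = t i) (ω : Ω) :
    ElemInt W b m t ω = ∑ j ∈ Finset.range N, b (s (j + 1)) ω * (W (s (j + 1)) ω - W (s j) ω) := by
  have hexp : ∀ j ∈ Finset.range N, b (s (j + 1)) ω * (W (s (j + 1)) ω - W (s j) ω) =
      ∑ i ∈ Finset.range m, b (t (i + 1)) ω *
        (if s (j + 1) ∈ Set.Ioc (t i) (t (i + 1)) then W (s (j + 1)) ω - W (s j) ω else 0) := by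
    intro j hj
    have hj := Finset.mem_range.1 hj
    have hlt : s j < s (j + 1) := hs hj.le (show j + 1 ≤ N from hj) (Nat.lt_succ_self j)
    rw [simple_apply_of_pos h ((hs0 j hj.le).trans_lt hlt), Finset.sum_mul]
    refine Finset.sum_congr rfl fun i _ => ?_
    by_cases hmem : s (j + 1) ∈ Set.Ioc (t i) (t (i + 1))
    · rw [Set.indicator_of_mem hmem, if_pos hmem]
    · rw [Set.indicator_of_notMem hmem, if_neg hmem]; ring
  rw [Finset.sum_congr rfl hexp, Finset.sum_comm, ElemInt]
  refine Finset.sum_congr rfl fun i hi => ?_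
  have hi := Finset.mem_range.1 hi
  rw [← Finset.mul_sum]
  congr 1
  obtain ⟨p, hp, hpt⟩ := href i hi.le
  obtain ⟨q, hq, hqt⟩ := href (i + 1) hi
  have hpq : p < q := (hs.lt_iff_lt hp hq).1 (by rw [hpt, hqt]; exact h.2.1 i hi)
  -- The cells inside `(t i, t (i + 1)]` are those with index in `[p, q)`; their increments telescope.
  rw [← Finset.sum_filter]
  have hfil : (Finset.range N).filter (fun j => s (j + 1) ∈ Set.Ioc (t i) (t (i + 1)))
      = Finset.Ico p q := by
    ext j
    simp only [Finset.mem_filter, Finset.mem_range, Finset.mem_Ico, Set.mem_Ioc, ← hpt, ← hqt]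
    constructor
    · rintro ⟨hj, h1, h2⟩
      have h1' := (hs.lt_iff_lt hp (show j + 1 ≤ N from hj)).1 h1
      have h2' := (hs.le_iff_le (show j + 1 ≤ N from hj) hq).1 h2
      omega
    · rintro ⟨h1, h2⟩
      have hjN : j + 1 ≤ N := le_trans h2 hq
      exact ⟨hjN, hs hp hjN (by omega), hs.monotoneOn hjN hq h2⟩
  rw [hfil, Finset.sum_Ico_sub (fun j => W (s j) ω) hpq.le, hpt, hqt]

/-- Each path of a simple process is bounded, since it takes finitely many values. -/
lemma simple_bounded (h : IsSimpleWith F b m t) (ω : Ω) : ∃ C : ℝ, ∀ x, |b x ω| ≤ C := by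
  refine ⟨|b 0 ω| + ∑ i ∈ Finset.range m, |b (t (i + 1)) ω|, fun x => ?_⟩
  have key : ∀ (A : Set ℝ) (c : ℝ), |Set.indicator A (fun _ => c) x| ≤ |c| := fun A c => by
    by_cases hx : x ∈ A
    · rw [Set.indicator_of_mem hx]
    · rw [Set.indicator_of_notMem hx, abs_zero]; exact abs_nonneg c
  rw [h.2.2.2.2 x ω]
  refine (abs_add_le _ _).trans (add_le_add (key _ _) ?_)
  exact (Finset.abs_sum_le_sum_abs _ _).trans (Finset.sum_le_sum fun i _ => key _ _)

end Refine

/-! ### Convergence to zero of the difference of the two elementary integrals -/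

/-- Riemann sums of a nonnegative function constant on the cells are dominated by its integral. -/
lemma sum_le_setIntegral {N : ℕ} {s : ℕ → ℝ} (hs : StrictMonoOn s (Set.Iic N)) {u : ℝ}
    (hs0 : ∀ j ≤ N, 0 ≤ s j) (hsu : ∀ j ≤ N, s j ≤ u) {g : ℝ → ℝ} (hg0 : ∀ x, 0 ≤ g x)
    (hg : IntegrableOn g (Set.Ioc 0 u))
    (hc : ∀ j < N, ∀ x ∈ Set.Ioc (s j) (s (j + 1)), g x = g (s (j + 1))) :
    ∑ j ∈ Finset.range N, g (s (j + 1)) * (s (j + 1) - s j) ≤ ∫ x in Set.Ioc 0 u, g x := by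
  have hlt : ∀ j < N, s j < s (j + 1) := fun j hj =>
    hs hj.le (show j + 1 ≤ N from hj) (Nat.lt_succ_self j)
  have hcell : ∀ j < N, ∫ x in (s j)..(s (j + 1)), g x = g (s (j + 1)) * (s (j + 1) - s j) := by
    intro j hj
    rw [intervalIntegral.integral_of_le (hlt j hj).le, setIntegral_congr_fun measurableSet_Ioc
      (fun x hx => hc j hj x hx)]
    simp [Real.volume_real_Ioc_of_le (hlt j hj).le, mul_comm]
  have h0N : s 0 ≤ s N := hs.monotoneOn (Nat.zero_le N) (le_refl N) (Nat.zero_le N)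
  have hsub : Set.Ioc (s 0) (s N) ⊆ Set.Ioc 0 u :=
    Set.Ioc_subset_Ioc (hs0 0 (Nat.zero_le N)) (hsu N le_rfl)
  rw [← Finset.sum_congr rfl fun j hj => hcell j (Finset.mem_range.1 hj),
    intervalIntegral.sum_integral_adjacent_intervals, intervalIntegral.integral_of_le h0N]
  · exact setIntegral_mono_set hg (ae_of_all _ hg0) hsub.eventuallyLE
  · intro j hj
    rw [intervalIntegrable_iff_integrableOn_Ioc_of_le (hlt j hj).le]
    exact hg.mono_set (Set.Ioc_subset_Ioc (hs0 j hj.le) (hsu (j + 1) hj))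

/-- The difference of two elementary integrals is controlled in probability by the pathwise
`L²` distances of the integrands to a common process `b`. -/
lemma elemInt_sub_tail_bound {P : Measure Ω} [IsProbabilityMeasure P] {F : Filtration ℝ mΩ}
    {W : ℝ → Ω → ℝ} (hW : IsWienerProcess P F W) {b : ℝ → Ω → ℝ} (hb : MemL2 P F b) {u : ℝ}
    (hu : 0 ≤ u) {f g : ℝ → Ω → ℝ} {m m' : ℕ} {t t' : ℕ → ℝ}
    (hf : IsSimpleWith F f m t) (hg : IsSimpleWith F g m' t')
    (hfm : Measurable (Function.uncurry f)) (hgm : Measurable (Function.uncurry g))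
    (hle : t m ≤ u) (hle' : t' m' ≤ u) {δ ε : ℝ} (hδ : 0 < δ) (hε : 0 < ε) :
    P {ω | ε ≤ |ElemInt W f m t ω - ElemInt W g m' t' ω|} ≤
      P {ω | δ / 4 ≤ ∫ x in Set.Ioc (0 : ℝ) u, (b x ω - f x ω) ^ 2} +
      P {ω | δ / 4 ≤ ∫ x in Set.Ioc (0 : ℝ) u, (b x ω - g x ω) ^ 2} +
        ENNReal.ofReal (δ / ε ^ 2) := by
  classical
  set G : Finset ℝ := (Finset.range (m + 1)).image t ∪ (Finset.range (m' + 1)).image t' with hG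
  have hmemt : ∀ i ≤ m, t i ∈ G := fun i hi =>
    Finset.mem_union_left _ (Finset.mem_image_of_mem _ (Finset.mem_range.2 (Nat.lt_succ_of_le hi)))
  have hmemt' : ∀ i ≤ m', t' i ∈ G := fun i hi =>
    Finset.mem_union_right _ (Finset.mem_image_of_mem _ (Finset.mem_range.2 (Nat.lt_succ_of_le hi)))
  have hGb : ∀ x ∈ G, 0 ≤ x ∧ x ≤ u := by
    have aux : ∀ {f : ℝ → Ω → ℝ} {m : ℕ} {t : ℕ → ℝ}, IsSimpleWith F f m t → t m ≤ u →
        ∀ i ≤ m, 0 ≤ t i ∧ t i ≤ u := fun hf hle i hi =>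
      ⟨hf.1 ▸ simple_grid_mono hf (Nat.zero_le _) hi (Nat.zero_le i),
        (simple_grid_mono hf hi (Set.mem_Iic.2 le_rfl) hi).trans hle⟩
    intro x hx
    rcases Finset.mem_union.1 hx with hx | hx
    · obtain ⟨i, hi, rfl⟩ := Finset.mem_image.1 hx
      exact aux hf hle i (Nat.lt_succ_iff.1 (Finset.mem_range.1 hi))
    · obtain ⟨i, hi, rfl⟩ := Finset.mem_image.1 hx
      exact aux hg hle' i (Nat.lt_succ_iff.1 (Finset.mem_range.1 hi))
  obtain ⟨N, s, hs, hsG, hGs⟩ := exists_grid_s11 G ⟨_, hmemt 0 (Nat.zero_le m)⟩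
  have hs0 : ∀ j ≤ N, 0 ≤ s j := fun j hj => (hGb _ (hsG j hj)).1
  have hsu : ∀ j ≤ N, s j ≤ u := fun j hj => (hGb _ (hsG j hj)).2
  have hlt : ∀ j < N, s j < s (j + 1) := fun j hj =>
    hs hj.le (show j + 1 ≤ N from hj) (Nat.lt_succ_self j)
  have href : ∀ i ≤ m, ∃ p ≤ N, s p = t i := fun i hi => hGs _ (hmemt i hi)
  have href' : ∀ i ≤ m', ∃ p ≤ N, s p = t' i := fun i hi => hGs _ (hmemt' i hi)
  have hdiff : ∀ ω, ElemInt W f m t ω - ElemInt W g m' t' ω = ∑ j ∈ Finset.range N,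
      (f (s (j + 1)) ω - g (s (j + 1)) ω) * (W (s (j + 1)) ω - W (s j) ω) := fun ω => by
    rw [elemInt_eq_refine W hf hs hs0 href, elemInt_eq_refine W hg hs hs0 href',
      ← Finset.sum_sub_distrib]
    exact Finset.sum_congr rfl fun j _ => by ring
  simp only [hdiff]
  refine (grid_tail_bound hW hs0 hlt
    (e := fun j ω => f (s (j + 1)) ω - g (s (j + 1)) ω) (fun j hj =>
      (simple_measurable_cell hf hs hs0 href hj).sub (simple_measurable_cell hg hs hs0 href' hj))
    hδ hε).trans (add_le_add ?_ le_rfl)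
  refine (measure_mono_ae ?_).trans (measure_union_le _ _)
  filter_upwards [hb.2.2 u hu] with ω hω hlarge
  have hlarge : δ < ∑ j ∈ Finset.range N,
      (f (s (j + 1)) ω - g (s (j + 1)) ω) ^ 2 * (s (j + 1) - s j) := hlarge
  have : IsFiniteMeasure (volume.restrict (Set.Ioc (0 : ℝ) u)) := by infer_instance
  have hsec : ∀ {h : ℝ → Ω → ℝ}, Measurable (Function.uncurry h) → Measurable fun x => h x ω :=
    fun hh => hh.comp (measurable_id.prodMk measurable_const)
  have hb2 : MemLp (fun x => b x ω) 2 (volume.restrict (Set.Ioc (0 : ℝ) u)) := by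
    rw [memLp_two_iff_integrable_sq (hsec hb.1).aestronglyMeasurable]
    refine ⟨((hsec hb.1).pow_const 2).aestronglyMeasurable, ?_⟩
    rw [hasFiniteIntegral_iff_ofReal (ae_of_all _ fun x => sq_nonneg _)]
    exact hω
  have hsimp2 : ∀ {h : ℝ → Ω → ℝ} {n : ℕ} {r : ℕ → ℝ}, IsSimpleWith F h n r →
      Measurable (Function.uncurry h) →
      MemLp (fun x => h x ω) 2 (volume.restrict (Set.Ioc (0 : ℝ) u)) := fun hh hm => by
    obtain ⟨C, hC⟩ := simple_bounded hh ω
    exact MemLp.of_bound (hsec hm).aestronglyMeasurable C (ae_of_all _ hC)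
  have hf2 := hsimp2 hf hfm
  have hg2 := hsimp2 hg hgm
  have hA := sum_le_setIntegral hs hs0 hsu (g := fun x => (f x ω - g x ω) ^ 2)
    (fun x => sq_nonneg _) (hf2.sub hg2).integrable_sq (fun j hj x hx => by
      simp only [simple_const_on_cell hf hs hs0 href hj hx,
        simple_const_on_cell hg hs hs0 href' hj hx])
  have hpar : ∫ x in Set.Ioc (0 : ℝ) u, (f x ω - g x ω) ^ 2 ≤
      2 * (∫ x in Set.Ioc (0 : ℝ) u, (b x ω - f x ω) ^ 2) +
      2 * (∫ x in Set.Ioc (0 : ℝ) u, (b x ω - g x ω) ^ 2) := by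
    have i1 : Integrable (fun x => (b x ω - f x ω) ^ 2) (volume.restrict (Set.Ioc (0 : ℝ) u)) :=
      (hb2.sub hf2).integrable_sq
    have i2 : Integrable (fun x => (b x ω - g x ω) ^ 2) (volume.restrict (Set.Ioc (0 : ℝ) u)) :=
      (hb2.sub hg2).integrable_sq
    rw [← integral_const_mul, ← integral_const_mul,
      ← integral_add (i1.const_mul 2) (i2.const_mul 2)]
    refine integral_mono (hf2.sub hg2).integrable_sq ((i1.const_mul 2).add (i2.const_mul 2))
      fun x => ?_
    dsimp only
    nlinarith [sq_nonneg ((b x ω - f x ω) + (b x ω - g x ω))]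
  by_contra hcon
  have hcon' : ¬ (δ / 4 ≤ (∫ x in Set.Ioc (0 : ℝ) u, (b x ω - f x ω) ^ 2) ∨
      δ / 4 ≤ ∫ x in Set.Ioc (0 : ℝ) u, (b x ω - g x ω) ^ 2) := hcon
  push Not at hcon'
  linarith [hcon'.1, hcon'.2]

/-- The probability limit of the elementary stochastic integrals does not depend on
the approximating sequence of simple `H²` processes. -/
theorem elemInt_limit_unique
    (P : Measure Ω) [IsProbabilityMeasure P] [P.IsComplete]
    (F : Filtration ℝ mΩ) (hF : AugmentedFiltration P F)
    (W : ℝ → Ω → ℝ) (hW : IsWienerProcess P F W)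
    (b : ℝ → Ω → ℝ) (hb : MemL2 P F b) (u : ℝ) (hu : 0 ≤ u)
    (bs cs : ℕ → ℝ → Ω → ℝ) (m m' : ℕ → ℕ) (τ τ' : ℕ → ℕ → ℝ)
    (hsimple : ∀ k, IsSimpleWith F (bs k) (m k) (τ k))
    (hsimple' : ∀ k, IsSimpleWith F (cs k) (m' k) (τ' k))
    (hH2 : ∀ k, MemH2 P F (bs k)) (hH2' : ∀ k, MemH2 P F (cs k))
    (hle : ∀ k, τ k (m k) ≤ u) (hle' : ∀ k, τ' k (m' k) ≤ u)
    (happrox : TendstoInMeasure P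
      (fun k ω => ∫ s in Set.Ioc (0 : ℝ) u, (b s ω - bs k s ω) ^ 2) atTop
      (fun _ => (0 : ℝ)))
    (happrox' : TendstoInMeasure P
      (fun k ω => ∫ s in Set.Ioc (0 : ℝ) u, (b s ω - cs k s ω) ^ 2) atTop
      (fun _ => (0 : ℝ)))
    (X Y : Ω → ℝ) (hX : Measurable X) (hY : Measurable Y)
    (hXlim : TendstoInMeasure P (fun k => ElemInt W (bs k) (m k) (τ k)) atTop X)
    (hYlim : TendstoInMeasure P (fun k => ElemInt W (cs k) (m' k) (τ' k)) atTop Y) :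
    ∀ᵐ ω ∂P, X ω = Y ω := by
  have hdiff : ∀ ε : ℝ, 0 < ε → Tendsto (fun k => P {ω | ε ≤
      |ElemInt W (bs k) (m k) (τ k) ω - ElemInt W (cs k) (m' k) (τ' k) ω|}) atTop (nhds 0) := by
    intro ε hε
    rw [ENNReal.tendsto_nhds_zero]
    intro η hη
    -- It suffices to treat finite `η`; then `δ` is chosen with `δ / ε² = η / 3`.
    wlog hfin : η ≠ ⊤ generalizing η
    · filter_upwards [this 1 one_pos ENNReal.one_ne_top] with k hk
      rw [not_not.1 hfin]; exact le_top
    have hη3 : 0 < (η / 3).toReal := ENNReal.toReal_pos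
      (ENNReal.div_pos hη.ne' (by simp)).ne' (ENNReal.div_ne_top hfin (by simp))
    set δ : ℝ := (η / 3).toReal * ε ^ 2 with hδdef
    have hδ : 0 < δ := by positivity
    have hconst : ENNReal.ofReal (δ / ε ^ 2) = η / 3 := by
      rw [hδdef, mul_div_cancel_right₀ _ (by positivity : ε ^ 2 ≠ 0),
        ENNReal.ofReal_toReal (ENNReal.div_ne_top hfin (by simp))]
    have hη3' : 0 < η / 3 := ENNReal.div_pos hη.ne' (by simp)
    have h1 := ENNReal.tendsto_nhds_zero.1
      (tendstoInMeasure_iff_norm.1 happrox (δ / 4) (by positivity)) (η / 3) hη3'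
    have h2 := ENNReal.tendsto_nhds_zero.1
      (tendstoInMeasure_iff_norm.1 happrox' (δ / 4) (by positivity)) (η / 3) hη3'
    filter_upwards [h1, h2] with k hk1 hk2
    refine (elemInt_sub_tail_bound hW hb hu (hsimple k) (hsimple' k) (hH2 k).1 (hH2' k).1
      (hle k) (hle' k) hδ hε).trans ?_
    rw [hconst]
    refine le_trans ?_ (ENNReal.add_thirds η).le
    refine add_le_add (add_le_add (le_trans (measure_mono fun ω hω => ?_) hk1)
      (le_trans (measure_mono fun ω hω => ?_) hk2)) le_rfl
    · simp only [Set.mem_ofPred_eq, sub_zero] at hω ⊢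
      exact hω.trans (Real.le_norm_self _)
    · simp only [Set.mem_ofPred_eq, sub_zero] at hω ⊢
      exact hω.trans (Real.le_norm_self _)
  have hlim : TendstoInMeasure P (fun k => ElemInt W (bs k) (m k) (τ k)) atTop Y := by
    rw [tendstoInMeasure_iff_norm]
    intro ε hε
    have h1 := hdiff (ε / 2) (by positivity)
    have h2 := tendstoInMeasure_iff_norm.1 hYlim (ε / 2) (by positivity)
    have h12 := h1.add h2
    rw [add_zero] at h12
    refine tendsto_of_tendsto_of_tendsto_of_le_of_le tendsto_const_nhds h12
      (fun _ => zero_le) fun k => ?_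
    refine (measure_mono fun ω hω => ?_).trans (measure_union_le _ _)
    simp only [Set.mem_union, Set.mem_ofPred_eq, Real.norm_eq_abs] at hω ⊢
    by_contra hcon
    push Not at hcon
    have := abs_sub_le (ElemInt W (bs k) (m k) (τ k) ω) (ElemInt W (cs k) (m' k) (τ' k) ω) (Y ω)
    linarith [hcon.1, hcon.2]
  exact tendstoInMeasure_ae_unique hXlim hlim
end
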